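/- Let D_X > 0, suppose some channel in ℛ_X(D_X;X) attains the minimal induced task distortion D_T^min = min 𝒟*_T(D_X;X), and suppose that for every channel k ∈ ℛ_X(D_X;X) with E[d_T(f(X), f(X̂))] = D_T^min there exist two points x̂₁ ≠ x̂₂ with nonzero marginal probabilities P(X̂ = x̂₁) > 0 and P(X̂ = x̂₂) > 0, identical task output f(x̂₁) = f(x̂₂), and at least one input x with P(X = x | X̂ = x̂₁) ≠ P(X = x | X̂ = x̂₂). Then the minimal achievable rate of the supervised approach is strictly lower than the input rate-distortion function: R_X(D_T^min;T) < R_X(D_X;X). -/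

import Mathlib

open scoped BigOperators

/-- Joint distribution P(a,b) = p(a)·k(a)(b) induced by a source `p` and a channel `k`,
as a real number. -/
noncomputable def jointP {A B : Type*} [Fintype A] [Fintype B] (p : PMF A) (k : A → PMF B)
    (a : A) (b : B) : ℝ :=
  (p a * k a b).toReal

/-- Marginal distribution of the second coordinate of the joint induced by `(p, k)`. -/
noncomputable def margSnd {A B : Type*} [Fintype A] [Fintype B] (p : PMF A) (k : A → PMF B)
    (b : B) : ℝ :=
  ∑ a, jointP p k a b

/-- Mutual information I(A;B) = ∑_{a,b} P(a,b)·log(P(a,b)/(P(a)·P(b))) of the joint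
induced by `(p, k)`; the convention 0·log 0 = 0 holds automatically in Lean. -/
noncomputable def mutualInfo {A B : Type*} [Fintype A] [Fintype B] (p : PMF A)
    (k : A → PMF B) : ℝ :=
  ∑ a, ∑ b, jointP p k a b * Real.log (jointP p k a b / ((p a).toReal * margSnd p k b))

/-- Expected distortion E[d(A,B)] under the joint induced by `(p, k)`. -/
noncomputable def expDist {A B : Type*} [Fintype A] [Fintype B] (p : PMF A) (k : A → PMF B)
    (d : A → B → ℝ) : ℝ :=
  ∑ a, ∑ b, jointP p k a b * d a b

/-- Rate-distortion function: infimum of mutual information over all channels `A → PMF B`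
meeting the expected-distortion constraint `≤ D`. -/
noncomputable def rate {A B : Type*} [Fintype A] [Fintype B] (p : PMF A) (d : A → B → ℝ)
    (D : ℝ) : ℝ :=
  sInf { r : ℝ | ∃ k : A → PMF B, expDist p k d ≤ D ∧ r = mutualInfo p k }

/-- Conditional probability P(A = a | B = b) under the joint induced by `(p, k)`. -/
noncomputable def condProb {A B : Type*} [Fintype A] [Fintype B] (p : PMF A) (k : A → PMF B)
    (a : A) (b : B) : ℝ :=
  jointP p k a b / margSnd p k b

/-!
Relabelling the output of a channel by a function `φ` cannot increase its mutual information: on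
each fibre of `φ` this is the log-sum inequality, that is, Jensen's inequality for the strictly
convex function `x ↦ x log x`, with weights `P(b)` and points `P(a | b) / P(a)`. It is therefore
strict as soon as `φ` identifies two symbols of positive probability with different posteriors.
If moreover replacing one of these symbols by the other does not raise the distortion, then the
relabelled channel has smaller rate and still meets the distortion bound. An X-optimal channel
attaining `D_T^min` is in this situation, because the task distortion sees `x̂₁` and `x̂₂` only
through `f(x̂₁) = f(x̂₂)`.
-/

section LogSum

variable {ι : Type*} {s : Finset ι} {u v : ι → ℝ}

theorem sum_mul_log_div_eq_sum_mul_sum (huv : ∀ i ∈ s, v i = 0 → u i = 0)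
    (hV : ∑ i ∈ s, v i ≠ 0) :
    ∑ i ∈ s, u i * Real.log (u i / v i) =
      (∑ i ∈ s, v i) *
        ∑ i ∈ s, (v i / ∑ j ∈ s, v j) • (u i / v i * Real.log (u i / v i)) := by
  rw [Finset.mul_sum]
  refine Finset.sum_congr rfl fun i hi => ?_
  rw [smul_eq_mul, ← mul_assoc, mul_div_cancel₀ _ hV, ← mul_assoc,
    mul_div_cancel_of_imp' (huv i hi)]

theorem sum_div_sum_eq_sum_smul_div (huv : ∀ i ∈ s, v i = 0 → u i = 0) :
    (∑ i ∈ s, u i) / ∑ i ∈ s, v i = ∑ i ∈ s, (v i / ∑ j ∈ s, v j) • (u i / v i) := by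
  rw [Finset.sum_div]
  refine Finset.sum_congr rfl fun i hi => ?_
  rw [smul_eq_mul, div_mul_eq_mul_div, mul_div_cancel_of_imp' (huv i hi)]

theorem sum_mul_log_sum_div_sum_le (hu : ∀ i ∈ s, 0 ≤ u i) (hv : ∀ i ∈ s, 0 ≤ v i)
    (huv : ∀ i ∈ s, v i = 0 → u i = 0) :
    (∑ i ∈ s, u i) * Real.log ((∑ i ∈ s, u i) / ∑ i ∈ s, v i) ≤
      ∑ i ∈ s, u i * Real.log (u i / v i) := by
  rcases (Finset.sum_nonneg hv).eq_or_lt' with hV | hV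
  · have hu₀ : ∀ i ∈ s, u i = 0 := fun i hi =>
      huv i hi ((Finset.sum_eq_zero_iff_of_nonneg hv).1 hV i hi)
    rw [Finset.sum_eq_zero hu₀, zero_mul]
    exact Finset.sum_nonneg fun i hi => by rw [hu₀ i hi, zero_mul]
  · have jensen := Real.convexOn_mul_log.map_sum_le
      (fun i hi => div_nonneg (hv i hi) hV.le) (by rw [← Finset.sum_div, div_self hV.ne'])
      (fun i hi => Set.mem_Ici.2 (div_nonneg (hu i hi) (hv i hi)))
    rw [← sum_div_sum_eq_sum_smul_div huv] at jensen
    rw [sum_mul_log_div_eq_sum_mul_sum huv hV.ne']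
    refine le_trans (le_of_eq ?_) (mul_le_mul_of_nonneg_left jensen hV.le)
    rw [← mul_assoc, mul_div_cancel₀ _ hV.ne']

theorem sum_mul_log_sum_div_sum_lt (hu : ∀ i ∈ s, 0 ≤ u i) (hv : ∀ i ∈ s, 0 ≤ v i)
    (huv : ∀ i ∈ s, v i = 0 → u i = 0) {i j : ι} (hi : i ∈ s) (hj : j ∈ s)
    (hvi : v i ≠ 0) (hvj : v j ≠ 0) (hij : u i / v i ≠ u j / v j) :
    (∑ i ∈ s, u i) * Real.log ((∑ i ∈ s, u i) / ∑ i ∈ s, v i) <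
      ∑ i ∈ s, u i * Real.log (u i / v i) := by
  have hV : 0 < ∑ i ∈ s, v i := Finset.sum_pos' hv ⟨i, hi, (hv i hi).lt_of_ne' hvi⟩
  have jensen := (Real.strictConvexOn_mul_log.map_sum_lt_iff_of_nonneg
    (fun i hi => div_nonneg (hv i hi) hV.le) (by rw [← Finset.sum_div, div_self hV.ne'])
    (fun i hi => Set.mem_Ici.2 (div_nonneg (hu i hi) (hv i hi)))).2
    ⟨i, hi, j, hj, div_ne_zero hvi hV.ne', div_ne_zero hvj hV.ne', hij⟩
  rw [← sum_div_sum_eq_sum_smul_div huv] at jensen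
  rw [sum_mul_log_div_eq_sum_mul_sum huv hV.ne']
  refine lt_of_eq_of_lt ?_ (mul_lt_mul_of_pos_left jensen hV)
  rw [← mul_assoc, mul_div_cancel₀ _ hV.ne']

end LogSum

section Channel

variable {A B C : Type*} [Fintype A] [Fintype B] [Fintype C] (p : PMF A) (k : A → PMF B)

theorem jointP_eq_mul (a : A) (b : B) : jointP p k a b = (p a).toReal * (k a b).toReal :=
  ENNReal.toReal_mul

theorem jointP_nonneg (a : A) (b : B) : 0 ≤ jointP p k a b :=
  ENNReal.toReal_nonneg

theorem margSnd_nonneg (b : B) : 0 ≤ margSnd p k b :=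
  Finset.sum_nonneg fun a _ => jointP_nonneg p k a b

theorem jointP_le_margSnd (a : A) (b : B) : jointP p k a b ≤ margSnd p k b :=
  Finset.single_le_sum (fun a _ => jointP_nonneg p k a b) (Finset.mem_univ a)

theorem jointP_eq_zero_of_mul_margSnd_eq_zero {a : A} {b : B}
    (h : (p a).toReal * margSnd p k b = 0) : jointP p k a b = 0 := by
  rcases mul_eq_zero.1 h with ha | hb
  · rw [jointP_eq_mul, ha, zero_mul]
  · exact le_antisymm (hb ▸ jointP_le_margSnd p k a b) (jointP_nonneg p k a b)

theorem toReal_ne_zero_of_condProb_ne {a : A} {b₁ b₂ : B}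
    (h : condProb p k a b₁ ≠ condProb p k a b₂) : (p a).toReal ≠ 0 := by
  contrapose! h
  simp only [condProb, jointP_eq_mul, h, zero_mul, zero_div]

theorem margSnd_const (q : PMF B) (b : B) : margSnd p (fun _ => q) b = (q b).toReal := by
  have hp : ∑ a, (p a).toReal = 1 := by
    rw [← ENNReal.toReal_sum fun a _ => p.apply_ne_top a, ← tsum_fintype (L := .unconditional A),
      p.tsum_coe, ENNReal.toReal_one]
  simp only [margSnd, jointP_eq_mul, ← Finset.sum_mul, hp, one_mul]

/-- The contribution `P(a,b)·log(P(a,b)/(P(a)·P(b)))` of the pair `(a, b)` to the mutual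
information, equal to `0` when `P(a,b) = 0`. -/
noncomputable def mutualInfoTerm (a : A) (b : B) : ℝ :=
  jointP p k a b * Real.log (jointP p k a b / ((p a).toReal * margSnd p k b))

theorem mutualInfo_eq_sum_fiberwise [DecidableEq C] (φ : B → C) :
    mutualInfo p k = ∑ a, ∑ c, ∑ b with φ b = c, mutualInfoTerm p k a b :=
  Finset.sum_congr rfl fun a _ => (Finset.sum_fiberwise _ φ (mutualInfoTerm p k a)).symm

theorem mutualInfo_const (q : PMF B) : mutualInfo p (fun _ => q) = 0 := by
  refine Finset.sum_eq_zero fun a _ => Finset.sum_eq_zero fun b _ => ?_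
  rw [margSnd_const, jointP_eq_mul]
  rcases eq_or_ne ((p a).toReal * (q b).toReal) 0 with h | h
  · rw [h, zero_mul]
  · rw [div_self h, Real.log_one, mul_zero]

theorem jointP_map [DecidableEq C] (φ : B → C) (a : A) (c : C) :
    jointP p (fun a => (k a).map φ) a c = ∑ b with φ b = c, jointP p k a b := by
  simp only [jointP_eq_mul]
  rw [← Finset.mul_sum, ← ENNReal.toReal_sum fun b _ => (k a).apply_ne_top b, PMF.map_apply,
    tsum_fintype, Finset.sum_filter]
  simp only [eq_comm (a := c)]

theorem margSnd_map [DecidableEq C] (φ : B → C) (c : C) :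
    margSnd p (fun a => (k a).map φ) c = ∑ b with φ b = c, margSnd p k b := by
  simp only [margSnd, jointP_map]
  exact Finset.sum_comm

theorem expDist_map (φ : B → C) (d : A → C → ℝ) :
    expDist p (fun a => (k a).map φ) d = expDist p k fun a b => d a (φ b) := by
  classical
  refine Finset.sum_congr rfl fun a _ => ?_
  rw [← Finset.sum_fiberwise Finset.univ φ]
  refine Finset.sum_congr rfl fun c _ => ?_
  rw [jointP_map, Finset.sum_mul]
  refine Finset.sum_congr rfl fun b hb => ?_
  rw [← (Finset.mem_filter.1 hb).2]

theorem expDist_mono {d d' : A → B → ℝ} (h : ∀ a b, d a b ≤ d' a b) :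
    expDist p k d ≤ expDist p k d' :=
  Finset.sum_le_sum fun a _ => Finset.sum_le_sum fun b _ =>
    mul_le_mul_of_nonneg_left (h a b) (jointP_nonneg p k a b)

theorem mutualInfoTerm_map_le [DecidableEq C] (φ : B → C) (a : A) (c : C) :
    mutualInfoTerm p (fun a => (k a).map φ) a c ≤ ∑ b with φ b = c, mutualInfoTerm p k a b := by
  rw [mutualInfoTerm, jointP_map, margSnd_map, Finset.mul_sum]
  exact sum_mul_log_sum_div_sum_le (fun b _ => jointP_nonneg p k a b)
    (fun b _ => mul_nonneg ENNReal.toReal_nonneg (margSnd_nonneg p k b))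
    fun b _ => jointP_eq_zero_of_mul_margSnd_eq_zero p k

theorem mutualInfo_map_le (φ : B → C) :
    mutualInfo p (fun a => (k a).map φ) ≤ mutualInfo p k := by
  classical
  rw [mutualInfo_eq_sum_fiberwise p k φ]
  exact Finset.sum_le_sum fun a _ => Finset.sum_le_sum fun c _ => mutualInfoTerm_map_le p k φ a c

theorem mutualInfo_nonneg : 0 ≤ mutualInfo p k :=
  -- a channel into a single point carries no information
  calc 0 = mutualInfo p fun a => (k a).map (Function.const B ()) := by
        simp only [PMF.map_const, mutualInfo_const]
    _ ≤ mutualInfo p k := mutualInfo_map_le p k _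

variable {p k} {a : A} {b₁ b₂ : B}

theorem mutualInfoTerm_map_lt [DecidableEq C] {φ : B → C} (hφ : φ b₁ = φ b₂)
    (h₁ : 0 < margSnd p k b₁) (h₂ : 0 < margSnd p k b₂)
    (ha : condProb p k a b₁ ≠ condProb p k a b₂) :
    mutualInfoTerm p (fun a => (k a).map φ) a (φ b₂) <
      ∑ b with φ b = φ b₂, mutualInfoTerm p k a b := by
  have hpa := toReal_ne_zero_of_condProb_ne p k ha
  have hratio : jointP p k a b₁ / ((p a).toReal * margSnd p k b₁) ≠
      jointP p k a b₂ / ((p a).toReal * margSnd p k b₂) := by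
    simp only [div_mul_eq_div_div_swap]
    exact fun h => ha ((div_left_inj' hpa).1 h)
  rw [mutualInfoTerm, jointP_map, margSnd_map, Finset.mul_sum]
  exact sum_mul_log_sum_div_sum_lt (fun b _ => jointP_nonneg p k a b)
    (fun b _ => mul_nonneg ENNReal.toReal_nonneg (margSnd_nonneg p k b))
    (fun b _ => jointP_eq_zero_of_mul_margSnd_eq_zero p k)
    (Finset.mem_filter.2 ⟨Finset.mem_univ b₁, hφ⟩) (Finset.mem_filter.2 ⟨Finset.mem_univ b₂, rfl⟩)
    (mul_ne_zero hpa h₁.ne') (mul_ne_zero hpa h₂.ne') hratio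

theorem mutualInfo_map_lt {φ : B → C} (hφ : φ b₁ = φ b₂)
    (h₁ : 0 < margSnd p k b₁) (h₂ : 0 < margSnd p k b₂)
    (ha : condProb p k a b₁ ≠ condProb p k a b₂) :
    mutualInfo p (fun a => (k a).map φ) < mutualInfo p k := by
  classical
  have hle := mutualInfoTerm_map_le p k φ
  rw [mutualInfo_eq_sum_fiberwise p k φ]
  exact Finset.sum_lt_sum (fun a _ => Finset.sum_le_sum fun c _ => hle a c)
    ⟨a, Finset.mem_univ a, Finset.sum_lt_sum (fun c _ => hle a c)
      ⟨φ b₂, Finset.mem_univ _, mutualInfoTerm_map_lt hφ h₁ h₂ ha⟩⟩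

theorem rate_le_mutualInfo {d : A → B → ℝ} {D : ℝ} (hk : expDist p k d ≤ D) :
    rate p d D ≤ mutualInfo p k :=
  csInf_le ⟨0, by rintro _ ⟨k', -, rfl⟩; exact mutualInfo_nonneg p k'⟩ ⟨k, hk, rfl⟩

theorem supervised_lt_input_rd_general {d : A → B → ℝ} {D : ℝ} (hD : expDist p k d ≤ D)
    (h₁ : 0 < margSnd p k b₁) (h₂ : 0 < margSnd p k b₂)
    (hd : ∀ a, d a b₁ ≤ d a b₂) (ha : condProb p k a b₁ ≠ condProb p k a b₂) :
    rate p d D < mutualInfo p k := by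
  classical
  let φ : B → B := Function.update id b₂ b₁
  have hφ₂ : φ b₂ = b₁ := Function.update_self ..
  have hφ : ∀ b, b ≠ b₂ → φ b = b := fun b hb => Function.update_of_ne hb ..
  have hφd : ∀ a b, d a (φ b) ≤ d a b := fun a b => by
    rcases eq_or_ne b b₂ with rfl | hb
    · exact hφ₂ ▸ hd a
    · rw [hφ b hb]
  have hdist : expDist p (fun a => (k a).map φ) d ≤ D :=
    (expDist_map p k φ d).trans_le ((expDist_mono p k hφd).trans hD)
  have hφ₁₂ : φ b₁ = φ b₂ := (hφ b₁ fun hb => ha (by rw [hb])).trans hφ₂.symm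
  exact (rate_le_mutualInfo hdist).trans_lt (mutualInfo_map_lt hφ₁₂ h₁ h₂ ha)

end Channel

/-- If some X-optimal channel attains D_T^min = min 𝒟*_T(D_X;X), and every
X-optimal channel attaining D_T^min has two distinct reconstruction points of positive
marginal probability with identical task output but differing posteriors, then
R_X(D_T^min;T) < R_X(D_X;X). Here f = h ∘ g. -/
theorem supervised_lt_input_rd
    {𝒳 𝒴 𝒯 : Type*} [Fintype 𝒳] [Fintype 𝒴] [Fintype 𝒯]
    [Nonempty 𝒳] [Nonempty 𝒴] [Nonempty 𝒯]
    (pX : PMF 𝒳) (g : 𝒳 → 𝒴) (h : 𝒴 → 𝒯)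
    (dT : 𝒯 → 𝒯 → ℝ) (hdT : ∀ t t', 0 ≤ dT t t')
    (dX : 𝒳 → 𝒳 → ℝ) (hdX : ∀ x x', 0 ≤ dX x x')
    (DX : ℝ) (hDX : 0 < DX)
    (kstar : 𝒳 → PMF 𝒳)
    (hk_dist : expDist pX kstar dX ≤ DX)
    (hk_rate : mutualInfo pX kstar = rate pX dX DX)
    (DTmin : ℝ)
    (hattain : DTmin = expDist pX kstar (fun x xhat => dT (h (g x)) (h (g xhat))))
    (hmin : ∀ k : 𝒳 → PMF 𝒳, expDist pX k dX ≤ DX →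
      mutualInfo pX k = rate pX dX DX →
      DTmin ≤ expDist pX k (fun x xhat => dT (h (g x)) (h (g xhat))))
    (hmerge : ∀ k : 𝒳 → PMF 𝒳, expDist pX k dX ≤ DX →
      mutualInfo pX k = rate pX dX DX →
      expDist pX k (fun x xhat => dT (h (g x)) (h (g xhat))) = DTmin →
      ∃ xhat₁ xhat₂ : 𝒳, xhat₁ ≠ xhat₂ ∧
        0 < margSnd pX k xhat₁ ∧ 0 < margSnd pX k xhat₂ ∧
        h (g xhat₁) = h (g xhat₂) ∧
        ∃ x : 𝒳, condProb pX k x xhat₁ ≠ condProb pX k x xhat₂) :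
    rate pX (fun x xhat => dT (h (g x)) (h (g xhat))) DTmin < rate pX dX DX := by
  obtain ⟨x₁, x₂, -, h₁, h₂, hf, x, hx⟩ := hmerge kstar hk_dist hk_rate hattain.symm
  exact hk_rate ▸ supervised_lt_input_rd_general hattain.ge h₁ h₂ (fun _ => by rw [hf]) hx
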